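/- arXiv:1403.1700 — 3 statements merged into one kernel-verified Lean document; each statement's English description precedes it below -/
import Mathlib

section
/- Let A = (a_{ij}) be an n×n matrix over an associative unital (possibly noncommutative) ring R with a_{ij} = 0 for j > i+1 and all superdiagonal entries a_{i,i+1} = 1. Then det A = (−1)^{n−1}·a_{n,1} + ∑_{k=1}^{n−1} ∑_{1 ≤ i_1 < i_2 < ⋯ < i_k < n} (−1)^{n−k−1}·a_{i_1,1}·a_{i_2,i_1+1}·a_{i_3,i_2+1}⋯a_{i_k,i_{k−1}+1}·a_{n,i_k+1}. -/
/-!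
Both sides satisfy the same recursion in the size `n`. The first row of the matrix is
`(a₁₁, 1, 0, …, 0)`, so a permutation contributing to the determinant sends column `1` or
column `2` to row `1`. In the first case the rest of the term belongs to the matrix with row `1`
and column `1` deleted; in the second, the factor `a₁₂ = 1` disappears and the rest of the term
belongs to the matrix with row `1` and column `2` deleted, with a sign change. Since `a₁₂ = 1` is
the only factor removed from the interior of a product, noncommutativity does no harm
(`cdet_succ_succ`).

On the other side, subsets `S ⊆ {1, …, n-1}` are split by whether `1 ∈ S`. If `1 ∈ S`, the chain
product starts with `a₁₁` and continues with a chain of the first minor; if not, it is a chain of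
the second minor (`chainSum_succ_succ`). Both minors are again of Hessenberg type with unit
superdiagonal, and induction applies.
-/

/-- The (column-)determinant of the `n × n` matrix with entries `a i j` (`1`-based indices
`1 ≤ i, j ≤ n`): `∑_{σ ∈ S_n} sgn(σ) · a_{σ(1),1} ⋯ a_{σ(n),n}`. -/
noncomputable def cdet {R : Type*} [Ring R] (n : ℕ) (a : ℕ → ℕ → R) : R :=
  ∑ σ : Equiv.Perm (Fin n),
    (Equiv.Perm.sign σ : ℤ) • ((List.finRange n).map (fun t => a ((σ t : ℕ) + 1) ((t : ℕ) + 1))).prod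

/-- Given a finite set `S = {i₁ < i₂ < ⋯ < i_k} ⊆ {1, …, n-1}`, the ordered chain product
`a_{i₁,1} · a_{i₂,i₁+1} · a_{i₃,i₂+1} ⋯ a_{i_k,i_{k-1}+1} · a_{n,i_k+1}`
(for `S = ∅` this is `a_{n,1}`). -/
noncomputable def chainProd {R : Type*} [Ring R] (n : ℕ) (a : ℕ → ℕ → R) (S : Finset ℕ) : R :=
  let l := S.sort (· ≤ ·)
  ((List.zip (l ++ [n]) (1 :: l.map (· + 1))).map (fun p => a p.1 p.2)).prod

/-- The matrix `a` with row `1` and column `2` deleted, in `1`-based indices. -/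
def dropSecondCol {R : Type*} (a : ℕ → ℕ → R) (i j : ℕ) : R :=
  if j = 1 then a (i + 1) 1 else a (i + 1) (j + 1)

/-- The right-hand side of the expansion as one signed sum of chain products over all subsets of
`{1, …, n-1}`, the empty one included. -/
noncomputable def chainSum {R : Type*} [Ring R] (n : ℕ) (a : ℕ → ℕ → R) : R :=
  ∑ S ∈ (Finset.Icc 1 (n - 1)).powerset, (-1 : R) ^ (n - 1 - S.card) * chainProd n a S

lemma cdet_one {R : Type*} [Ring R] (a : ℕ → ℕ → R) : cdet 1 a = a 1 1 := by
  simp [cdet, List.finRange_succ]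

/-- Expansion along the first row. A permutation of `Fin (m + 2)` is encoded by
`Equiv.Perm.decomposeFin` as a pair `(p, τ)`: the image `p` of `0`, and a permutation `τ` of the
remaining indices. For `p = q + 1` the row `0` is hit by the column `τ⁻¹ q + 1`, so the term
vanishes unless `q = τ 0`. -/
lemma cdet_succ_succ {R : Type*} [Ring R] (m : ℕ) (a : ℕ → ℕ → R)
    (h0 : ∀ j, 3 ≤ j → j ≤ m + 2 → a 1 j = 0) (h1 : a 1 2 = 1) :
    cdet (m + 2) a = a 1 1 * cdet (m + 1) (fun i j => a (i + 1) (j + 1))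
      - cdet (m + 1) (dropSecondCol a) := by
  unfold cdet
  rw [Finset.univ_perm_fin_succ, Finset.sum_map, ← Finset.univ_product_univ,
    Finset.sum_product_right, Finset.mul_sum, ← Finset.sum_sub_distrib]
  refine Finset.sum_congr rfl fun τ _ => ?_
  rw [Fin.sum_univ_succ, sub_eq_add_neg]
  congr 1
  · simp [List.finRange_succ (n := m + 1), Function.comp_def]
    exact (Int.cast_commute _ _).left_comm _
  · rw [Finset.sum_eq_single (τ 0)]
    · have key : ∀ t : Fin m,
          Equiv.swap (0 : Fin (m + 2)) (τ 0).succ (τ t.succ).succ = (τ t.succ).succ := by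
        intro t
        apply Equiv.swap_apply_of_ne_of_ne (Fin.succ_ne_zero _)
        intro h
        have := τ.injective (Fin.succ_injective _ h)
        exact Fin.succ_ne_zero _ this
      simp [List.finRange_succ (n := m + 1), List.finRange_succ (n := m), Function.comp_def,
        dropSecondCol, key, h1, Equiv.Perm.decomposeFin_symm_apply_succ, -Fin.succ_zero_eq_one]
    · intro q _ hq
      convert smul_zero _
      apply List.prod_eq_zero
      rw [List.mem_map]
      refine ⟨(τ.symm q).succ, List.mem_finRange _, ?_⟩
      have hne : τ.symm q ≠ 0 := fun h => hq (by rw [← h]; simp)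
      have hpos : 0 < (τ.symm q : ℕ) := Nat.pos_of_ne_zero fun h => hne (Fin.ext h)
      have hlt := (τ.symm q).isLt
      simp only [Equiv.coe_toEmbedding, Equiv.Perm.decomposeFin_symm_apply_succ,
        Equiv.apply_symm_apply, Equiv.swap_apply_right, Fin.val_zero, Fin.val_succ, zero_add]
      exact h0 _ (by omega) (by omega)
    · simp

lemma sort_map_succ (T : Finset ℕ) :
    (T.map (addRightEmbedding 1)).sort (· ≤ ·) = (T.sort (· ≤ ·)).map (· + 1) := by
  symm
  exact Finset.map_sort (addRightEmbedding 1) T (r := (· ≤ ·)) (r' := (· ≤ ·)) (by simp)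

lemma one_notMem_map_succ {m : ℕ} {T : Finset ℕ} (hT : T ⊆ Finset.Icc 1 m) :
    1 ∉ T.map (addRightEmbedding 1) := by
  intro h
  obtain ⟨x, hx, hx'⟩ := Finset.mem_map.1 h
  have := Finset.mem_Icc.1 (hT hx)
  simp at hx'
  omega

lemma chainProd_insert_one {R : Type*} [Ring R] (m : ℕ) (a : ℕ → ℕ → R) (T : Finset ℕ)
    (hT : T ⊆ Finset.Icc 1 m) :
    chainProd (m + 2) a (insert 1 (T.map (addRightEmbedding 1))) =
      a 1 1 * chainProd (m + 1) (fun i j => a (i + 1) (j + 1)) T := by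
  unfold chainProd
  have hs : (insert 1 (T.map (addRightEmbedding 1))).sort (· ≤ ·) =
      1 :: (T.sort (· ≤ ·)).map (· + 1) := by
    rw [Finset.sort_insert _ _ (one_notMem_map_succ hT), sort_map_succ]
    simp
  rw [hs]
  generalize T.sort (· ≤ ·) = l
  have e1 : l.map (· + 1) ++ [m + 2] = (l ++ [m + 1]).map (· + 1) := by simp
  simp only [List.cons_append, List.map_cons, List.zip_cons_cons, List.prod_cons]
  rw [e1, ← List.map_cons (f := (· + 1)), List.zip_map, List.map_map]
  rfl

lemma chainProd_map_succ {R : Type*} [Ring R] (m : ℕ) (a : ℕ → ℕ → R) (T : Finset ℕ)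
    (hT : T ⊆ Finset.Icc 1 m) :
    chainProd (m + 2) a (T.map (addRightEmbedding 1)) =
      chainProd (m + 1) (dropSecondCol a) T := by
  unfold chainProd
  rw [sort_map_succ]
  have hl : ∀ x ∈ T.sort (· ≤ ·), 1 ≤ x := fun x hx =>
    (Finset.mem_Icc.1 (hT ((Finset.mem_sort _).1 hx))).1
  generalize T.sort (· ≤ ·) = l at hl
  have e1 : l.map (· + 1) ++ [m + 2] = (l ++ [m + 1]).map (· + 1) := by simp
  simp only [e1]
  obtain ⟨x, xs, hx⟩ : ∃ x xs, l ++ [m + 1] = x :: xs := by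
    cases l <;> simp
  rw [hx]
  simp only [List.map_cons, List.zip_cons_cons, List.prod_cons]
  congr 1
  rw [List.zip_map, List.map_map]
  congr 1
  apply List.map_congr_left
  rintro ⟨i, j⟩ hij
  obtain ⟨y, hy, rfl⟩ := List.mem_map.1 (List.of_mem_zip hij).2
  have := hl y hy
  simp [dropSecondCol, show y ≠ 0 by omega]

lemma chainSum_succ_succ {R : Type*} [Ring R] (m : ℕ) (a : ℕ → ℕ → R) :
    chainSum (m + 2) a = a 1 1 * chainSum (m + 1) (fun i j => a (i + 1) (j + 1))
      - chainSum (m + 1) (dropSecondCol a) := by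
  have hI : Finset.Icc 1 (m + 1) =
      insert 1 ((Finset.Icc 1 m).map (addRightEmbedding 1)) := by
    rw [Finset.map_add_right_Icc]
    ext x
    simp only [Finset.mem_Icc, Finset.mem_insert]
    omega
  have hP : ((Finset.Icc 1 m).map (addRightEmbedding 1)).powerset =
      (Finset.Icc 1 m).powerset.map (Finset.mapEmbedding (addRightEmbedding 1)).toEmbedding := by
    ext S
    simp only [Finset.mem_powerset, Finset.subset_map_iff, Finset.mem_map]
    exact ⟨fun ⟨u, h, e⟩ => ⟨u, h, e.symm⟩, fun ⟨u, h, e⟩ => ⟨u, h, e.symm⟩⟩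
  unfold chainSum
  simp only [show m + 2 - 1 = m + 1 from rfl, Nat.add_sub_cancel]
  rw [hI, Finset.sum_powerset_insert (one_notMem_map_succ subset_rfl), hP, Finset.sum_map,
    Finset.sum_map, add_comm, sub_eq_add_neg, Finset.mul_sum, ← Finset.sum_neg_distrib]
  congr 1 <;> refine Finset.sum_congr rfl fun T hT => ?_
  · have hT := Finset.mem_powerset.1 hT
    simp only [RelEmbedding.coe_toEmbedding, Finset.mapEmbedding_apply]
    rw [chainProd_insert_one m a T hT, Finset.card_insert_of_notMem (one_notMem_map_succ hT),
      Finset.card_map, Nat.add_sub_add_right, ← mul_assoc, ← mul_assoc,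
      ((Commute.neg_one_left (a 1 1)).pow_left (m - T.card)).eq]
  · have hT := Finset.mem_powerset.1 hT
    have hc := Finset.card_le_card hT
    rw [Nat.card_Icc, Nat.add_sub_cancel] at hc
    simp only [RelEmbedding.coe_toEmbedding, Finset.mapEmbedding_apply]
    rw [chainProd_map_succ m a T hT, Finset.card_map, Nat.sub_add_comm hc, pow_succ]
    simp

lemma cdet_eq_chainSum {R : Type*} [Ring R] (m : ℕ) : ∀ (a : ℕ → ℕ → R)
    (_ : ∀ i j, 1 ≤ i → 1 ≤ j → i ≤ m + 1 → j ≤ m + 1 → i + 1 < j → a i j = 0)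
    (_ : ∀ i, 1 ≤ i → i + 1 ≤ m + 1 → a i (i + 1) = 1), cdet (m + 1) a = chainSum (m + 1) a := by
  induction m with
  | zero =>
    intro a _ _
    rw [zero_add, cdet_one]
    simp [chainSum, chainProd]
  | succ m ih =>
    intro a h0 h1
    rw [cdet_succ_succ m a (fun j h h' => h0 1 j (by omega) (by omega) (by omega) (by omega)
      (by omega)) (h1 1 (by omega) (by omega)), chainSum_succ_succ, ih, ih]
    · intro i j _ _ _ _ _
      rw [dropSecondCol, if_neg (by omega)]
      apply h0 <;> omega
    · intro i _ _
      rw [dropSecondCol, if_neg (by omega)]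
      apply h1 <;> omega
    · intro i j _ _ _ _ _
      apply h0 <;> omega
    · intro i _ _
      apply h1 <;> omega

/-- For an `n × n` matrix `A = (a_{ij})` over a ring `R` with `a_{ij} = 0` for `j > i+1` and
all superdiagonal entries `a_{i,i+1} = 1`, the determinant is given by
`det A = (−1)^{n−1}·a_{n,1} + ∑_{k=1}^{n−1} ∑_{1 ≤ i₁ < ⋯ < i_k < n} (−1)^{n−k−1}·
a_{i₁,1}·a_{i₂,i₁+1}⋯a_{i_k,i_{k-1}+1}·a_{n,i_k+1}`. -/
theorem cdet_hessenberg_expansion {R : Type*} [Ring R] (n : ℕ) (hn : 1 ≤ n)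
    (a : ℕ → ℕ → R)
    (hHess : ∀ i j, 1 ≤ i → 1 ≤ j → i ≤ n → j ≤ n → i + 1 < j → a i j = 0)
    (hSuper : ∀ i, 1 ≤ i → i + 1 ≤ n → a i (i + 1) = 1) :
    cdet n a =
      (-1 : R) ^ (n - 1) * a n 1 +
        ∑ k ∈ Finset.Icc 1 (n - 1),
          ∑ S ∈ (Finset.Icc 1 (n - 1)).powerset.filter (fun S => S.card = k),
            (-1 : R) ^ (n - k - 1) * chainProd n a S := by
  obtain ⟨m, rfl⟩ : ∃ m, n = m + 1 := ⟨n - 1, by omega⟩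
  rw [cdet_eq_chainSum m a hHess hSuper, chainSum]
  simp only [Nat.add_sub_cancel]
  -- Group the subsets by cardinality; the empty set gives the term outside the sum.
  rw [← Finset.sum_fiberwise_of_maps_to (t := Finset.range (m + 1)) (g := Finset.card)
    (fun S hS => by
      have := Finset.card_le_card (Finset.mem_powerset.1 hS)
      rw [Nat.card_Icc] at this
      exact Finset.mem_range.2 (by omega)),
    show Finset.range (m + 1) = insert 0 (Finset.Icc 1 m) by
      ext x; simp only [Finset.mem_range, Finset.mem_insert, Finset.mem_Icc]; omega,
    Finset.sum_insert (by simp)]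
  congr 1
  · rw [show (Finset.Icc 1 m).powerset.filter (fun S => S.card = 0) = {∅} by
      ext S
      simp only [Finset.mem_filter, Finset.mem_powerset, Finset.card_eq_zero,
        Finset.mem_singleton]
      exact ⟨fun h => h.2, fun h => ⟨h ▸ Finset.empty_subset _, h⟩⟩]
    simp [chainProd]
  · refine Finset.sum_congr rfl fun k _ => Finset.sum_congr rfl fun S hS => ?_
    rw [(Finset.mem_filter.1 hS).2, show m + 1 - k - 1 = m - k by omega]
end

section
/- Fix p ∈ {0,1,…,n}. For a matrix A as in the context, det A = D_p·\bar{D}_{n−p} + ∑_{j=1}^{p} ∑_{i=p+1}^{n} (−1)^{j+i}·D_{j−1}·ã_{ij}·\bar{D}_{n−i}, where for i > j one sets ã_{ij} = a_{ij}·a_{j,j+1}·a_{j+1,j+2}⋯a_{i−1,i}. -/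
/-- `D_i`: the determinant of the `i × i` submatrix on the first `i` rows and columns
(`Dtop n a 0 = 1`). -/
noncomputable def Dtop {R : Type*} [Ring R] (a : ℕ → ℕ → R) (i : ℕ) : R :=
  cdet i a

/-- `D̄_i`: the determinant of the `i × i` submatrix of the `n × n` matrix `a` on the last `i`
rows and columns (`Dbot n a 0 = 1`). -/
noncomputable def Dbot {R : Type*} [Ring R] (n : ℕ) (a : ℕ → ℕ → R) (i : ℕ) : R :=
  cdet i (fun k l => a (n - i + k) (n - i + l))

/-- `ã_{ij} = a_{ij} · a_{j,j+1} · a_{j+1,j+2} ⋯ a_{i−1,i}` for `i > j`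
(and for `i = j` it is just `a_{ii}`). -/
noncomputable def atilde {R : Type*} [Ring R] (a : ℕ → ℕ → R) (i j : ℕ) : R :=
  a i j * ((List.range (i - j)).map (fun t => a (j + t) (j + t + 1))).prod

/-- The column-determinant of a matrix indexed by `Fin n`. -/
def colDet {R : Type*} [Ring R] {n : ℕ} (M : Fin n → Fin n → R) : R :=
  ∑ σ : Equiv.Perm (Fin n),
    (Equiv.Perm.sign σ : ℤ) • (List.ofFn (fun t => M (σ t) t)).prod

lemma cdet_eq_colDet {R : Type*} [Ring R] (n : ℕ) (a : ℕ → ℕ → R) :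
    cdet n a = colDet (fun i j : Fin n => a (i + 1) (j + 1)) := by
  simp only [cdet, colDet, List.ofFn_eq_map]

/-- Laplace expansion along the first column: the entries of that column are the leftmost factors
of the products, so commutativity plays no role. -/
lemma colDet_succ_column_zero {R : Type*} [Ring R] {n : ℕ} (M : Fin (n + 1) → Fin (n + 1) → R) :
    colDet M = ∑ i : Fin (n + 1),
      (-1 : R) ^ (i : ℕ) * (M i 0 * colDet (fun k l : Fin n => M (i.succAbove k) l.succ)) := by
  have key : ∀ i : Fin (n + 1), ∀ e : Equiv.Perm (Fin n),
      (Equiv.Perm.sign (Equiv.Perm.decomposeFin.symm (i, e)) : ℤ) •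
        (List.ofFn (fun t => M (Equiv.Perm.decomposeFin.symm (i, e) t) t)).prod =
      (Equiv.Perm.sign (Equiv.Perm.decomposeFin.symm (i, e)) : ℤ) • (M i 0 *
        (List.ofFn (fun t : Fin n => M (Equiv.swap 0 i (e t).succ) t.succ)).prod) := by
    intro i e
    simp [List.ofFn_succ]
  rw [colDet, ← Equiv.sum_comp Equiv.Perm.decomposeFin.symm, Fintype.sum_prod_type]
  refine Finset.sum_congr rfl fun i _ => ?_
  simp only [key]
  induction i using Fin.cases with
  | zero =>
    simp only [colDet, Finset.mul_sum, Equiv.Perm.decomposeFin.symm_sign, Equiv.swap_self,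
      Equiv.refl_apply, if_true, one_mul, Fin.val_zero, pow_zero, mul_smul_comm,
      Fin.succAbove_zero]
  | succ i =>
    -- Left multiplication by the cycle `(0 1 ⋯ i)` turns the transposition `swap 0 i.succ` of
    -- `decomposeFin` into the order-preserving `i.succ.succAbove`.
    rw [colDet]
    conv_rhs => rw [← Equiv.sum_comp (Equiv.mulLeft i.cycleRange)]
    simp only [Finset.mul_sum]
    refine Finset.sum_congr rfl fun e _ => ?_
    simp only [Equiv.coe_mulLeft, Equiv.Perm.coe_mul, Function.comp_apply,
      Fin.succAbove_cycleRange, Equiv.Perm.sign_mul, Fin.sign_cycleRange,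
      Equiv.Perm.decomposeFin.symm_sign]
    rw [if_neg (Fin.succ_ne_zero i)]
    generalize (List.ofFn fun t : Fin n => M (Equiv.swap 0 i.succ (e t).succ) t.succ).prod = x
    rcases Int.units_eq_one_or (Equiv.Perm.sign e) with h | h <;>
      rcases Nat.even_or_odd (i : ℕ) with h2 | h2 <;>
        simp [h, pow_succ, h2.neg_one_pow]

lemma colDet_eq_zero_of_row {R : Type*} [Ring R] {n : ℕ} (M : Fin n → Fin n → R) (i : Fin n)
    (h : ∀ j, M i j = 0) : colDet M = 0 := by
  refine Finset.sum_eq_zero fun σ _ => ?_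
  have : (List.ofFn (fun t => M (σ t) t)).prod = 0 := by
    apply List.prod_eq_zero
    rw [List.mem_ofFn]
    exact ⟨σ.symm i, by simp [h]⟩
  rw [this, smul_zero]

lemma cdet_succ_column {R : Type*} [Ring R] (n : ℕ) (b : ℕ → ℕ → R) :
    cdet (n + 1) b = ∑ i ∈ Finset.range (n + 1),
      (-1 : R) ^ i * (b (i + 1) 1 * cdet n (fun k l => b (if k ≤ i then k else k + 1) (l + 1))) := by
  rw [cdet_eq_colDet, colDet_succ_column_zero, Finset.sum_range]
  refine Finset.sum_congr rfl fun i _ => ?_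
  rw [cdet_eq_colDet]
  congr 3
  funext k l
  congr 1
  by_cases h : (k : ℕ) + 1 ≤ i
  · rw [if_pos h, Fin.succAbove_of_castSucc_lt _ _ (by simpa [Fin.lt_def] using h)]
    simp
  · rw [if_neg h, Fin.succAbove_of_le_castSucc _ _ (by simp [Fin.le_def]; omega)]
    simp

lemma cdet_congr {R : Type*} [Ring R] {m n : ℕ} (hmn : m = n) {b c : ℕ → ℕ → R}
    (h : ∀ k l, 1 ≤ k → k ≤ m → b k l = c k l) : cdet m b = cdet n c := by
  subst hmn
  rw [cdet_eq_colDet, cdet_eq_colDet]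
  congr 1
  funext k l
  exact h _ _ (by omega) (by omega)

/-- If the first row vanishes off the diagonal, its diagonal entry splits off on the left: every
other minor of the first column expansion contains the truncated first row, which is zero. -/
lemma cdet_succ_of_row {R : Type*} [Ring R] (n : ℕ) (b : ℕ → ℕ → R)
    (h : ∀ l, 2 ≤ l → l ≤ n + 1 → b 1 l = 0) :
    cdet (n + 1) b = b 1 1 * cdet n (fun k l => b (k + 1) (l + 1)) := by
  rw [cdet_succ_column, Finset.sum_eq_single 0]
  · simp only [pow_zero, one_mul, zero_add]
    refine congrArg _ (cdet_congr rfl fun k l hk _ => ?_)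
    rw [if_neg (by omega)]
  · intro i hi hi0
    rw [Finset.mem_range] at hi
    have : cdet n (fun k l => b (if k ≤ i then k else k + 1) (l + 1)) = 0 := by
      rw [cdet_eq_colDet]
      refine colDet_eq_zero_of_row _ ⟨0, by omega⟩ fun j => ?_
      simp only [zero_add]
      rw [if_pos (by omega)]
      exact h _ (by omega) (by omega)
    rw [this, mul_zero, mul_zero]
  · simp

lemma cdet_of_lowerTriangular_rows {R : Type*} [Ring R] (m : ℕ) (c : ℕ → ℕ → R) (i : ℕ)
    (hi : i ≤ m) (h : ∀ k l, 1 ≤ k → k ≤ i → k < l → l ≤ m → c k l = 0) :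
    cdet m c = ((List.range i).map (fun t => c (t + 1) (t + 1))).prod *
      cdet (m - i) (fun k l => c (i + k) (i + l)) := by
  induction i with
  | zero => simp
  | succ i ih =>
    rw [ih (by omega) fun k l h1 h2 => h k l h1 (by omega)]
    obtain ⟨q, hq⟩ : ∃ q, m - i = q + 1 := ⟨m - i - 1, by omega⟩
    rw [hq, cdet_succ_of_row q (fun k l => c (i + k) (i + l))
      (fun l hl hl' => h _ _ (by omega) (by omega) (by omega) (by omega)), List.range_succ, List.map_append, List.prod_append, ← mul_assoc]
    simp only [List.map_cons, List.map_nil, List.prod_cons, List.prod_nil, mul_one]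
    congr 1
    refine cdet_congr (by omega) fun k l _ _ => ?_
    congr 1 <;> omega

/-- First-step recursion for a Hessenberg matrix: `i + 1` is the end of the first block. -/
lemma cdet_hessenberg_rec {R : Type*} [Ring R] (m : ℕ) (b : ℕ → ℕ → R)
    (h : ∀ k l, 1 ≤ k → k + 1 < l → l ≤ m + 1 → b k l = 0) :
    cdet (m + 1) b = ∑ i ∈ Finset.range (m + 1), (-1 : R) ^ i *
      (b (i + 1) 1 * ((List.range i).map (fun t => b (t + 1) (t + 2))).prod *
        cdet (m - i) (fun k l => b (i + 1 + k) (i + 1 + l))) := by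
  rw [cdet_succ_column]
  refine Finset.sum_congr rfl fun i hi => ?_
  rw [Finset.mem_range] at hi
  rw [cdet_of_lowerTriangular_rows m _ i (by omega), mul_assoc]
  · congr 3
    · congr 1
      refine List.map_congr_left fun t ht => ?_
      rw [List.mem_range] at ht
      rw [if_pos (by omega)]
    · refine cdet_congr rfl fun k l hk _ => ?_
      rw [if_neg (by omega)]
      congr 1 <;> omega
  · intro k l h1 h2 h3 h4
    rw [if_pos h2]
    exact h _ _ h1 (by omega) (by omega)

/-- The determinant of the block of `a` on rows and columns `s + 1, …, t`. -/
noncomputable def blockDet {R : Type*} [Ring R] (a : ℕ → ℕ → R) (s t : ℕ) : R :=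
  cdet (t - s) (fun k l => a (s + k) (s + l))

lemma blockDet_self {R : Type*} [Ring R] (a : ℕ → ℕ → R) (s : ℕ) : blockDet a s s = 1 := by
  rw [blockDet, Nat.sub_self]
  simp [cdet]

/-- The signed weight of the cyclic block on `s + 1, …, u`, viewed as a step from `s` to `u`. -/
noncomputable def stepWeight {R : Type*} [Ring R] (a : ℕ → ℕ → R) (s u : ℕ) : R :=
  (-1 : R) ^ (s + 1 + u) * atilde a u (s + 1)

lemma blockDet_rec {R : Type*} [Ring R] (n : ℕ) (a : ℕ → ℕ → R)
    (hHess : ∀ i j, 1 ≤ i → 1 ≤ j → i ≤ n → j ≤ n → i + 1 < j → a i j = 0)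
    (s t : ℕ) (hst : s < t) (htn : t ≤ n) :
    blockDet a s t = ∑ u ∈ Finset.Ioc s t, stepWeight a s u * blockDet a u t := by
  obtain ⟨m, rfl⟩ : ∃ m, t = s + 1 + m := ⟨t - s - 1, by omega⟩
  have e : s + 1 + m - s = m + 1 := by omega
  rw [blockDet, e, cdet_hessenberg_rec m _
    (fun k l h1 h2 h3 => hHess _ _ (by omega) (by omega) (by omega) (by omega) (by omega))]
  have hI : Finset.Ioc s (s + 1 + m) = Finset.Ico (s + 1) (s + 1 + (m + 1)) := by
    ext x; simp only [Finset.mem_Ioc, Finset.mem_Ico]; omega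
  rw [hI, Finset.sum_Ico_eq_sum_range, Nat.add_sub_cancel_left]
  refine Finset.sum_congr rfl fun i hi => ?_
  rw [Finset.mem_range] at hi
  have hs : (-1 : R) ^ (s + 1 + (s + 1 + i)) = (-1) ^ i := by
    rw [← add_assoc, pow_add, Even.neg_one_pow ⟨s + 1, rfl⟩, one_mul]
  rw [stepWeight, hs, atilde, Nat.add_sub_cancel_left, blockDet, mul_assoc ((-1 : R) ^ i)]
  congr 2
  · congr 1
    · congr 1; omega
    · congr 1
      refine List.map_congr_left fun t _ => ?_
      congr 1 <;> omega
  · refine cdet_congr (by omega) fun k l _ _ => ?_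
    congr 1 <;> omega

/-- Let `e s t` be the weighted count of increasing paths from `s` to `t ≤ n`, characterised by its
first-step recursion. Paths from `s` to `n` either visit `p` or make a step from some `j < p` to
some `i > p`. -/
lemma path_middle_expansion {R : Type*} [Ring R] (n : ℕ) (e w : ℕ → ℕ → R)
    (h1 : ∀ s, e s s = 1)
    (hrec : ∀ s t, s < t → t ≤ n → e s t = ∑ u ∈ Finset.Ioc s t, w s u * e u t)
    (p : ℕ) (hp : p ≤ n) (d s : ℕ) (hd : s + d = p) :
    e s n = e s p * e p n +
      ∑ j ∈ Finset.Ico s p, ∑ i ∈ Finset.Ioc p n, e s j * w j i * e i n := by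
  induction d using Nat.strong_induction_on generalizing s with
  | _ d ih =>
    rcases Nat.eq_zero_or_pos d with rfl | hpos
    · obtain rfl : s = p := by omega
      simp [h1]
    have hsp : s < p := by omega
    have hfirst : ∑ u ∈ Finset.Ioc s p, w s u * e u n =
        e s p * e p n + ∑ j ∈ Finset.Ioo s p, ∑ i ∈ Finset.Ioc p n, e s j * w j i * e i n := by
      have hu : ∀ u ∈ Finset.Ioc s p, w s u * e u n = w s u * e u p * e p n +
          ∑ j ∈ Finset.Ico u p, w s u * e u j * ∑ i ∈ Finset.Ioc p n, w j i * e i n := by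
        intro u hu
        rw [Finset.mem_Ioc] at hu
        rw [ih (p - u) (by omega) u (by omega), mul_add]
        simp only [Finset.mul_sum, mul_assoc]
      rw [Finset.sum_congr rfl hu, Finset.sum_add_distrib, ← Finset.sum_mul,
        ← hrec s p hsp hp]
      congr 1
      rw [Finset.sum_comm' (t' := Finset.Ioo s p) (s' := fun j => Finset.Ioc s j)
        (by intro x y; simp only [Finset.mem_Ioc, Finset.mem_Ico, Finset.mem_Ioo]; omega)]
      refine Finset.sum_congr rfl fun j hj => ?_
      rw [Finset.mem_Ioo] at hj
      rw [← Finset.sum_mul, ← hrec s j hj.1 (by omega), Finset.mul_sum]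
      simp only [mul_assoc]
    rw [hrec s n (by omega) le_rfl, ← Finset.sum_Ioc_consecutive _ hsp.le hp, hfirst,
      ← Finset.Ioo_insert_left hsp, Finset.sum_insert (by simp), h1]
    simp only [one_mul]
    abel

/-- Lemma 3.1 of Molev–Ragoucy: for a Hessenberg matrix with central superdiagonal entries
and any `0 ≤ p ≤ n`,
`det A = D_p·D̄_{n−p} + ∑_{j=1}^{p} ∑_{i=p+1}^{n} (−1)^{j+i}·D_{j−1}·ã_{ij}·D̄_{n−i}`. -/
theorem cdet_middle_expansion {R : Type*} [Ring R] (n : ℕ) (hn : 1 ≤ n)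
    (a : ℕ → ℕ → R)
    (hHess : ∀ i j, 1 ≤ i → 1 ≤ j → i ≤ n → j ≤ n → i + 1 < j → a i j = 0)
    (hCentral : ∀ i, 1 ≤ i → i + 1 ≤ n → a i (i + 1) ∈ Set.center R)
    (p : ℕ) (hp : p ≤ n) :
    cdet n a =
      Dtop a p * Dbot n a (n - p) +
        ∑ j ∈ Finset.Icc 1 p, ∑ i ∈ Finset.Icc (p + 1) n,
          (-1 : R) ^ (j + i) * (Dtop a (j - 1) * atilde a i j * Dbot n a (n - i)) := by
  have htop : ∀ i, Dtop a i = blockDet a 0 i := fun i => by simp [Dtop, blockDet]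
  have hbot : ∀ i, i ≤ n → Dbot n a (n - i) = blockDet a i n := fun i hi => by
    simp only [Dbot, blockDet, Nat.sub_sub_self hi]
  have h0 : cdet n a = blockDet a 0 n := by simp [blockDet]
  rw [h0, htop, hbot p hp, path_middle_expansion n (blockDet a) (stepWeight a) (blockDet_self a)
    (blockDet_rec n a hHess) p hp p 0 (zero_add p)]
  congr 1
  have hI : Finset.Icc 1 p = Finset.Ico (0 + 1) (p + 1) := by
    ext x; simp only [Finset.mem_Icc, Finset.mem_Ico]; omega
  rw [hI, ← Finset.sum_Ico_add']
  refine Finset.sum_congr rfl fun j _ => Finset.sum_congr ?_ fun i hi => ?_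
  · ext x; simp only [Finset.mem_Icc, Finset.mem_Ioc]; omega
  · rw [Finset.mem_Icc] at hi
    rw [htop, hbot i hi.2, Nat.add_sub_cancel, stepWeight, ← mul_assoc, ← mul_assoc, ← mul_assoc,
      ((Commute.neg_one_left (blockDet a 0 j)).pow_left (j + 1 + i)).eq]
end

section
/- (Noncommutative MacMahon Master Theorem for Hessenberg matrices.) Define e_m ∈ R by det(1 + tA) = ∑_{m=0}^{n} e_m·t^m, and define h_0 = 1 and, for m ≥ 1, h_m = ∑_{s=1}^{m} ∑ a_{i_1 j_1}·a_{i_2 j_2}⋯a_{i_s j_s}, the inner sum over all sequences i_1,…,i_s, j_1,…,j_s in {1,…,n} with i_k ≥ j_k for k = 1,…,s, i_k ≥ j_{k+1} for k = 1,…,s−1, and ∑_{k=1}^{s}(i_k − j_k) = m − s. Then in the power-series ring R[[t]] (t central): (∑_{m≥0} h_m·t^m)·(∑_{m=0}^{n} (−1)^m e_m·t^m) = 1; equivalently, ∑_{k=0}^{m} (−1)^k·h_{m−k}·e_k = 0 for every m ≥ 1. -/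
/-!
Put `w_{ij} = t^{i-j+1} a_{ij}` for `i ≥ j`. Because `1 + tA` is Hessenberg with central
superdiagonal `t`, its leading minors at `-t`, called `D_k`, satisfy
`D_k = D_{k-1} - ∑_{j ≤ k} D_{j-1} w_{kj}` (`minorSeries_succ`, from the expansion `cdet_hess`);
here `D_0 = 1` and `D_n = e(-t)`.

On the other side `h(t)` is the sum of `w_{i₁j₁}⋯w_{i_sj_s}` over all words with `i_k ≥ j_{k+1}`.
Let `G_p` be the sum over the empty word and the words with `i_s > p`. Removing the last letter
gives `G_{p-1} = G_p + ∑_{j ≤ p} G_{j-1} w_{pj}` (`tailSeries_step`), with `G_0 = h(t)` and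
`G_n = 1`.

The two recursions together yield `h(t) D_p = G_p` by induction on `p`
(`tailSeries_mul_minorSeries`), and `p = n` is the theorem.
-/

open scoped Classical

/-- The coefficients `e_m ∈ R` defined by `det(1 + tA) = ∑_{m=0}^{n} e_m t^m` in `R[t]`.
(For `m > n` this coefficient vanishes, so `e` may be regarded as a function on all of `ℕ`.) -/
noncomputable def eCoeff {R : Type*} [Ring R] (n : ℕ) (a : ℕ → ℕ → R) (m : ℕ) : R :=
  Polynomial.coeff
    (cdet n (fun i j => (if i = j then 1 else 0) + Polynomial.X * Polynomial.C (a i j))) m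

/-- The noncommutative complete symmetric functions of a Hessenberg matrix: `h_0 = 1` and, for
`m ≥ 1`, `h_m = ∑_{s=1}^{m} ∑ a_{i₁j₁}⋯a_{i_sj_s}`, the inner sum over all sequences with
`i_k ≥ j_k` (`k = 1,…,s`), `i_k ≥ j_{k+1}` (`k = 1,…,s−1`) and `∑_k (i_k − j_k) = m − s`. -/
noncomputable def hElem {R : Type*} [Ring R] (n : ℕ) (a : ℕ → ℕ → R) (m : ℕ) : R :=
  if m = 0 then 1 else
    ∑ s ∈ Finset.Icc 1 m,
      ∑ p ∈ Finset.univ.filter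
          (fun p : (Fin s → Fin n) × (Fin s → Fin n) =>
            (∀ k, (p.2 k : ℕ) ≤ (p.1 k : ℕ)) ∧
            (∀ k : Fin s, ∀ h : (k : ℕ) + 1 < s, (p.2 ⟨(k : ℕ) + 1, h⟩ : ℕ) ≤ (p.1 k : ℕ)) ∧
            (∑ k, ((p.1 k : ℕ) - (p.2 k : ℕ)) = m - s)),
        ((List.finRange s).map (fun k => a ((p.1 k : ℕ) + 1) ((p.2 k : ℕ) + 1))).prod

/-! ### Hessenberg determinants -/

theorem cdet_congr_s5 {S : Type*} [Ring S] {n : ℕ} {b b' : ℕ → ℕ → S}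
    (h : ∀ i j, 1 ≤ i → i ≤ n → 1 ≤ j → j ≤ n → b i j = b' i j) : cdet n b = cdet n b' := by
  unfold cdet
  refine Finset.sum_congr rfl fun σ _ => ?_
  congr 2
  refine List.map_congr_left fun t _ => ?_
  have := (σ t).2
  have := t.2
  exact h _ _ (by omega) (by omega) (by omega) (by omega)

theorem cdet_zero {S : Type*} [Ring S] (b : ℕ → ℕ → S) : cdet 0 b = 1 := by
  simp [cdet]

/-- Expansion along the last column, whose entry is the rightmost factor of every term. Writing a
permutation with `σ (n + 1) = i ≠ n + 1` as a transposition of `i` and `n + 1` times a permutation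
of the first `n` indices shows that its cofactor is minus the leading `n × n` minor with row `i`
replaced by row `n + 1`. -/
theorem cdet_succ {S : Type*} [Ring S] (n : ℕ) (b : ℕ → ℕ → S) :
    cdet (n + 1) b = cdet n b * b (n + 1) (n + 1)
      - ∑ i : Fin n, cdet n (fun r j => if r = (i : ℕ) + 1 then b (n + 1) j else b r j)
          * b ((i : ℕ) + 1) (n + 1) := by
  let e : Equiv.Perm (Fin (n + 1)) ≃ Option (Fin n) × Equiv.Perm (Fin n) :=
    (finSuccEquivLast.permCongr).trans Equiv.Perm.decomposeOption
  unfold cdet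
  rw [← Equiv.sum_comp e.symm, Fintype.sum_prod_type, Fintype.sum_option, sub_eq_add_neg,
    ← Finset.sum_neg_distrib]
  congr 1
  · rw [Finset.sum_mul]
    refine Finset.sum_congr rfl fun τ _ => ?_
    simp [e, List.finRange_succ_last, Function.comp_def, mul_assoc]
  · refine Finset.sum_congr rfl fun i _ => ?_
    rw [Finset.sum_mul, ← Finset.sum_neg_distrib]
    refine Finset.sum_congr rfl fun τ _ => ?_
    have key : ∀ t : Fin n, ((e.symm (some i, τ) t.castSucc : Fin (n + 1)) : ℕ) =
        if (τ t : ℕ) + 1 = (i : ℕ) + 1 then n else (τ t : ℕ) := by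
      intro t
      by_cases h : τ t = i
      · simp [e, h]
      · have h' : (τ t : ℕ) ≠ i := fun h' => h (Fin.ext h')
        simp [e, Equiv.swap_apply_of_ne_of_ne, h, h']
    have hl : ((e.symm (some i, τ) (Fin.last n) : Fin (n + 1)) : ℕ) = i := by
      simp [e]
    have hs : Equiv.Perm.sign (e.symm (some i, τ)) = - Equiv.Perm.sign τ := by
      simp [e]
    rw [hs]
    simp only [List.finRange_succ_last, List.map_append, List.map_map, List.prod_append,
      Function.comp_def, List.map_cons, List.map_nil, List.prod_singleton, key, hl]
    simp only [Fin.val_last, Fin.val_castSucc, Units.val_neg, neg_smul, smul_mul_assoc, neg_inj]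
    congr 4
    ext t
    split_ifs <;> rfl

/-- Determinant of a leading Hessenberg block whose last row is replaced by an arbitrary row `r`.
Keeping `r` arbitrary makes the induction work: expanding along the last column leaves, besides the
leading minor, only the next smaller block, again with its last row replaced by `r`. -/
theorem cdet_hess_row {S : Type*} [Ring S] (N : ℕ) (b : ℕ → ℕ → S) (c : S)
    (h0 : ∀ i j, 1 ≤ i → i + 1 < j → j ≤ N → b i j = 0)
    (h1 : ∀ i, 1 ≤ i → i + 1 ≤ N → b i (i + 1) = c) (r : ℕ → S) (k : ℕ) (hk : k + 1 ≤ N) :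
    cdet (k + 1) (fun i j => if i = k + 1 then r j else b i j) =
      ∑ j ∈ Finset.range (k + 1), cdet j b * r (j + 1) * (-c) ^ (k - j) := by
  induction k with
  | zero => rw [cdet_succ]; simp [cdet_zero]
  | succ k ih =>
    rw [cdet_succ, Finset.sum_range_succ, Fin.sum_univ_castSucc, Finset.sum_eq_zero, zero_add,
      sub_eq_neg_add]
    · congr 1
      · rw [if_neg (by simp), Fin.val_last, h1 _ (by omega) hk, ← mul_neg]
        have : cdet (k + 1) (fun i j => if i = k + 1 then
              (if k + 1 + 1 = k + 1 + 1 then r j else b (k + 1 + 1) j) else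
              (if i = k + 1 + 1 then r j else b i j)) =
            cdet (k + 1) (fun i j => if i = k + 1 then r j else b i j) :=
          cdet_congr_s5 fun i j _ _ _ _ => by
            rw [if_pos rfl, if_neg (show i ≠ k + 1 + 1 by omega)]
        rw [this, ih (by omega), Finset.sum_mul]
        refine Finset.sum_congr rfl fun j hj => ?_
        have := Finset.mem_range.1 hj
        rw [mul_assoc, ← pow_succ]
        congr 2
        omega
      · rw [if_pos rfl, Nat.sub_self, pow_zero, mul_one]
        congr 1
        exact cdet_congr_s5 fun i j _ _ _ _ => if_neg (by omega)
    · intro i _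
      have := i.2
      rw [if_neg (by simp; omega), h0 _ _ (by omega) (by simp) hk, mul_zero]

/-- Expansion of the leading minors of a Hessenberg matrix with constant superdiagonal `c` along the
last row. -/
theorem cdet_hess {S : Type*} [Ring S] (N : ℕ) (b : ℕ → ℕ → S) (c : S)
    (h0 : ∀ i j, 1 ≤ i → i + 1 < j → j ≤ N → b i j = 0)
    (h1 : ∀ i, 1 ≤ i → i + 1 ≤ N → b i (i + 1) = c) (k : ℕ) (hk : k + 1 ≤ N) :
    cdet (k + 1) b =
      ∑ j ∈ Finset.range (k + 1), cdet j b * b (k + 1) (j + 1) * (-c) ^ (k - j) := by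
  rw [← cdet_hess_row N b c h0 h1 _ k hk]
  refine cdet_congr_s5 fun i j _ _ _ _ => ?_
  split_ifs with h
  · rw [h]
  · rfl

/-! ### Words and their generating series -/

/-- The sum of the products `a_{i₁j₁}⋯a_{i_sj_s}` over the words of length `s` occurring in the
definition of `h`, with `∑ (i_k − j_k) = d`, whose last letter satisfies `i_s ≥ p`. The indices
`i_k`, `j_k` and the bound `p` count from `0` here; for `s = 0` the bound is vacuous. -/
noncomputable def wordSum {R : Type*} [Ring R] (n : ℕ) (a : ℕ → ℕ → R) (s p d : ℕ) : R :=
  ∑ w ∈ Finset.univ.filter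
      (fun w : (Fin s → Fin n) × (Fin s → Fin n) =>
        (∀ k, (w.2 k : ℕ) ≤ (w.1 k : ℕ)) ∧
        (∀ k : Fin s, ∀ h : (k : ℕ) + 1 < s, (w.2 ⟨(k : ℕ) + 1, h⟩ : ℕ) ≤ (w.1 k : ℕ)) ∧
        (∑ k, ((w.1 k : ℕ) - (w.2 k : ℕ)) = d) ∧
        (∀ k : Fin s, (k : ℕ) + 1 = s → p ≤ (w.1 k : ℕ))),
    ((List.finRange s).map (fun k => a ((w.1 k : ℕ) + 1) ((w.2 k : ℕ) + 1))).prod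

theorem wordSum_zero {R : Type*} [Ring R] (n : ℕ) (a : ℕ → ℕ → R) (p d : ℕ) :
    wordSum n a 0 p d = if d = 0 then 1 else 0 := by
  unfold wordSum
  rw [Finset.sum_filter]
  simp [eq_comm]

/-- Removing the last letter `(i, j)` of a word: the condition left on the remaining word is that
the row index of its own last letter is at least `j`. -/
theorem wordSum_succ {R : Type*} [Ring R] (n : ℕ) (a : ℕ → ℕ → R) (s p d : ℕ) :
    wordSum n a (s + 1) p d =
      ∑ i ∈ Finset.Ico p n, ∑ j ∈ Finset.range (i + 1),
        if i - j ≤ d then wordSum n a s j (d - (i - j)) * a (i + 1) (j + 1) else 0 := by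
  have step : wordSum n a (s + 1) p d = ∑ i : Fin n, ∑ j : Fin n,
      if p ≤ (i : ℕ) then if (j : ℕ) ≤ i then if (i : ℕ) - j ≤ d then
        wordSum n a s j (d - (i - j)) * a (i + 1) (j + 1) else 0 else 0 else 0 := by
    unfold wordSum
    rw [Finset.sum_filter, Fintype.sum_prod_type,
      ← Equiv.sum_comp (Fin.snocEquiv fun _ => Fin n), Fintype.sum_prod_type]
    refine Finset.sum_congr rfl fun i _ => ?_
    simp_rw [← Equiv.sum_comp (Fin.snocEquiv fun _ : Fin (s + 1) => Fin n),
      Fintype.sum_prod_type]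
    rw [Finset.sum_comm]
    refine Finset.sum_congr rfl fun j _ => ?_
    -- `Fin.snoc u i` and `Fin.snoc v j` are the row and column indices of the word obtained by
    -- appending the letter `(i, j)` to the word `(u, v)`.
    have hprod : ∀ u v : Fin s → Fin n,
        ((List.finRange (s + 1)).map (fun k =>
          a (((Fin.snoc u i : Fin (s + 1) → Fin n) k : ℕ) + 1)
            (((Fin.snoc v j : Fin (s + 1) → Fin n) k : ℕ) + 1))).prod =
        ((List.finRange s).map (fun k => a ((u k : ℕ) + 1) ((v k : ℕ) + 1))).prod *
          a ((i : ℕ) + 1) ((j : ℕ) + 1) := by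
      intro u v
      simp [List.finRange_succ_last, Function.comp_def]
    have hsucc : ∀ (v : Fin s → Fin n) (k : Fin s) (h : (k : ℕ) + 1 < s + 1),
        (Fin.snoc v j : Fin (s + 1) → Fin n) ⟨(k : ℕ) + 1, h⟩ =
          if h' : (k : ℕ) + 1 < s then v ⟨(k : ℕ) + 1, h'⟩ else j := by
      intro v k h
      simp only [Fin.snoc]
      split_ifs <;> simp
    have hcond : ∀ u v : Fin s → Fin n,
        ((∀ k : Fin (s + 1), ((Fin.snoc v j : Fin (s + 1) → Fin n) k : ℕ) ≤
            ((Fin.snoc u i : Fin (s + 1) → Fin n) k : ℕ)) ∧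
          (∀ k : Fin (s + 1), ∀ h : (k : ℕ) + 1 < s + 1,
            ((Fin.snoc v j : Fin (s + 1) → Fin n) ⟨(k : ℕ) + 1, h⟩ : ℕ) ≤
              ((Fin.snoc u i : Fin (s + 1) → Fin n) k : ℕ)) ∧
          (∑ k : Fin (s + 1), (((Fin.snoc u i : Fin (s + 1) → Fin n) k : ℕ) -
              ((Fin.snoc v j : Fin (s + 1) → Fin n) k : ℕ)) = d) ∧
          (∀ k : Fin (s + 1), (k : ℕ) + 1 = s + 1 →
            p ≤ ((Fin.snoc u i : Fin (s + 1) → Fin n) k : ℕ))) ↔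
        (p ≤ (i : ℕ) ∧ (j : ℕ) ≤ i ∧ (i : ℕ) - j ≤ d) ∧
          (∀ k, (v k : ℕ) ≤ (u k : ℕ)) ∧
          (∀ k : Fin s, ∀ h : (k : ℕ) + 1 < s, (v ⟨(k : ℕ) + 1, h⟩ : ℕ) ≤ (u k : ℕ)) ∧
          (∑ k, ((u k : ℕ) - (v k : ℕ)) = d - (i - j)) ∧
          (∀ k : Fin s, (k : ℕ) + 1 = s → (j : ℕ) ≤ (u k : ℕ)) := by
      intro u v
      simp only [Fin.forall_fin_succ', Fin.sum_univ_castSucc, Fin.snoc_castSucc, Fin.snoc_last,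
        Fin.val_castSucc, Fin.val_last, hsucc]
      constructor
      · rintro ⟨⟨h1, h2⟩, ⟨h3, -⟩, h4, -, h5⟩
        refine ⟨⟨h5 trivial, h2, by omega⟩, h1, fun k hk => ?_, by omega, fun k hk => ?_⟩
        · have := h3 k (by omega)
          rwa [dif_pos hk] at this
        · have := h3 k (by omega)
          rwa [dif_neg (by omega)] at this
      · rintro ⟨⟨h1, h2, h3⟩, h4, h5, h6, h7⟩
        refine ⟨⟨h4, h2⟩, ⟨fun k hk => ?_, fun h => by omega⟩, by omega,
          fun k hk => by omega, fun _ => h1⟩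
        split_ifs with h
        · exact h5 k h
        · exact h7 k (by omega)
    simp only [Fin.snocEquiv, Equiv.coe_fn_mk, hcond, hprod]
    rw [← ite_and, ← ite_and]
    by_cases h : (p ≤ (i : ℕ) ∧ (j : ℕ) ≤ i) ∧ (i : ℕ) - j ≤ d
    · rw [if_pos h, Finset.sum_filter, Fintype.sum_prod_type, Finset.sum_mul]
      simp only [Finset.sum_mul, ite_mul, zero_mul, and_assoc.1 h, true_and]
    · have h' : ¬ (p ≤ (i : ℕ) ∧ (j : ℕ) ≤ i ∧ (i : ℕ) - j ≤ d) := by rwa [← and_assoc]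
      simp only [h, h', false_and, if_false, Finset.sum_const_zero]
  -- It remains to replace the sums over `Fin n` with conditions by sums over intervals of `ℕ`.
  rw [step, Fin.sum_univ_eq_sum_range (fun i => ∑ j : Fin n,
      if p ≤ i then if (j : ℕ) ≤ i then if i - j ≤ d then
        wordSum n a s j (d - (i - j)) * a (i + 1) (j + 1) else 0 else 0 else 0) n]
  have hIco : Finset.Ico p n = (Finset.range n).filter (p ≤ ·) := by
    ext i
    simp only [Finset.mem_Ico, Finset.mem_filter, Finset.mem_range]
    omega
  rw [hIco, Finset.sum_filter]
  refine Finset.sum_congr rfl fun i hi => ?_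
  have hi := Finset.mem_range.1 hi
  have hrange : Finset.range (i + 1) = (Finset.range n).filter (· ≤ i) := by
    ext j
    simp only [Finset.mem_filter, Finset.mem_range]
    omega
  split_ifs with hp
  · rw [hrange, Finset.sum_filter, ← Fin.sum_univ_eq_sum_range (fun j =>
      if j ≤ i then if i - j ≤ d then
        wordSum n a s j (d - (i - j)) * a (i + 1) (j + 1) else 0 else 0) n]
  · exact Finset.sum_const_zero

/-- The part of `h_m` coming from the words with `i_s ≥ p` (`p` counted from `0`), the empty word
being included when `m = 0`. The length `s` and the total drop `d` satisfy `s + d = m`. -/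
noncomputable def tailCoeff {R : Type*} [Ring R] (n : ℕ) (a : ℕ → ℕ → R) (p m : ℕ) : R :=
  ∑ s ∈ Finset.range (m + 1), wordSum n a s p (m - s)

theorem hElem_eq_tailCoeff {R : Type*} [Ring R] (n : ℕ) (a : ℕ → ℕ → R) (m : ℕ) :
    hElem n a m = tailCoeff n a 0 m := by
  unfold hElem tailCoeff
  split_ifs with hm
  · subst hm
    simp [wordSum_zero]
  · rw [Finset.sum_range_succ', wordSum_zero, if_neg (by omega), add_zero,
      show Finset.Icc 1 m = Finset.Ico (0 + 1) (m + 1) by ext; simp [Nat.succ_le_iff],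
      ← Finset.sum_Ico_add', ← Finset.range_eq_Ico]
    simp [wordSum]

theorem tailCoeff_succ {R : Type*} [Ring R] (n : ℕ) (a : ℕ → ℕ → R) (p m : ℕ) :
    tailCoeff n a p (m + 1) =
      ∑ i ∈ Finset.Ico p n, ∑ j ∈ Finset.range (i + 1),
        if i - j ≤ m then tailCoeff n a j (m - (i - j)) * a (i + 1) (j + 1) else 0 := by
  unfold tailCoeff
  rw [Finset.sum_range_succ', wordSum_zero, if_neg (by omega), add_zero]
  simp_rw [wordSum_succ]
  rw [Finset.sum_comm]
  refine Finset.sum_congr rfl fun i _ => ?_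
  rw [Finset.sum_comm]
  refine Finset.sum_congr rfl fun j _ => ?_
  split_ifs with h
  · rw [Finset.sum_mul, ← Finset.sum_filter]
    refine Finset.sum_congr ?_ fun s _ => ?_
    · ext s
      simp only [Finset.mem_filter, Finset.mem_range]
      omega
    · congr 2
      omega
  · refine Finset.sum_eq_zero fun s _ => if_neg (by omega)

/-- The generating series `G_p = ∑_m tailCoeff n a p m * t ^ m`, so that `G_0 = h(t)` and
`G_n = 1`. -/
noncomputable def tailSeries {R : Type*} [Ring R] (n : ℕ) (a : ℕ → ℕ → R) (p : ℕ) :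
    PowerSeries R :=
  PowerSeries.mk (tailCoeff n a p)

theorem tailSeries_eq {R : Type*} [Ring R] (n : ℕ) (a : ℕ → ℕ → R) (p : ℕ) :
    tailSeries n a p = 1 + ∑ i ∈ Finset.Ico p n, ∑ j ∈ Finset.range (i + 1),
      tailSeries n a j * (PowerSeries.C (a (i + 1) (j + 1)) * PowerSeries.X ^ (i - j + 1)) := by
  ext m
  rw [map_add, map_sum]
  simp_rw [map_sum, ← mul_assoc, PowerSeries.coeff_mul_X_pow', PowerSeries.coeff_mul_C]
  rcases m with _ | m
  · simp [tailSeries, tailCoeff, wordSum_zero]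
  · simp [tailSeries, tailCoeff_succ, PowerSeries.coeff_one]

theorem tailSeries_top {R : Type*} [Ring R] (n : ℕ) (a : ℕ → ℕ → R) :
    tailSeries n a n = 1 := by
  rw [tailSeries_eq]; simp

theorem tailSeries_step {R : Type*} [Ring R] (n : ℕ) (a : ℕ → ℕ → R) (p : ℕ) (hp : p < n) :
    tailSeries n a p = tailSeries n a (p + 1) + ∑ j ∈ Finset.range (p + 1),
      tailSeries n a j * (PowerSeries.C (a (p + 1) (j + 1)) * PowerSeries.X ^ (p - j + 1)) := by
  rw [tailSeries_eq n a p, tailSeries_eq n a (p + 1), Finset.sum_eq_sum_Ico_succ_bot hp]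
  abel

/-! ### Generating series of the minors -/

/-- The ring homomorphism `R[t] → R⟦t⟧` fixing `R` and sending `t` to `-t`. -/
noncomputable def evalNegX {R : Type*} [Ring R] : Polynomial R →+* PowerSeries R :=
  Polynomial.eval₂RingHom' PowerSeries.C (-PowerSeries.X)
    fun r => (PowerSeries.commute_X (PowerSeries.C r)).neg_right

theorem coeff_evalNegX {R : Type*} [Ring R] (P : Polynomial R) (m : ℕ) :
    PowerSeries.coeff m (evalNegX P) = (-1 : R) ^ m * P.coeff m := by
  induction P using Polynomial.induction_on' with
  | add P Q hP hQ => rw [map_add, map_add, hP, hQ, Polynomial.coeff_add, mul_add]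
  | monomial k r =>
    have : evalNegX (Polynomial.monomial k r) =
        PowerSeries.C ((-1) ^ k * r) * PowerSeries.X ^ k := by
      change Polynomial.eval₂ _ _ _ = _
      rw [Polynomial.eval₂_monomial, neg_pow, ← mul_assoc]
      congr 1
      rw [map_mul, map_pow, map_neg, map_one]
      exact ((Commute.neg_one_left _).pow_left k).eq.symm
    rw [this, PowerSeries.coeff_mul_X_pow', Polynomial.coeff_monomial]
    rcases lt_trichotomy k m with h | h | h
    · rw [if_pos h.le, PowerSeries.coeff_C, if_neg (by omega), if_neg (by omega), mul_zero]
    · subst h; simp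
    · rw [if_neg (by omega), if_neg (by omega), mul_zero]

/-- The series `D_k`: the leading `k × k` minor of `1 + tA`, evaluated at `-t`. Thus
`D_n = e(-t)`. -/
noncomputable def minorSeries {R : Type*} [Ring R] (a : ℕ → ℕ → R) (k : ℕ) : PowerSeries R :=
  evalNegX (cdet k fun i j => (if i = j then 1 else 0) + Polynomial.X * Polynomial.C (a i j))

theorem minorSeries_succ {R : Type*} [Ring R] (n : ℕ) (a : ℕ → ℕ → R)
    (hHess : ∀ i j, 1 ≤ i → 1 ≤ j → i ≤ n → j ≤ n → i + 1 < j → a i j = 0)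
    (hSuper : ∀ i, 1 ≤ i → i + 1 ≤ n → a i (i + 1) = 1) (k : ℕ) (hk : k < n) :
    minorSeries a (k + 1) = minorSeries a k - ∑ j ∈ Finset.range (k + 1),
      minorSeries a j * (PowerSeries.C (a (k + 1) (j + 1)) * PowerSeries.X ^ (k - j + 1)) := by
  have hX : evalNegX (Polynomial.X : Polynomial R) = -PowerSeries.X := Polynomial.eval₂_X _ _
  have hC : ∀ r : R, evalNegX (Polynomial.C r) = PowerSeries.C r := fun r => Polynomial.eval₂_C _ _
  have hmain := cdet_hess n
    (fun i j => (if i = j then 1 else 0) + Polynomial.X * Polynomial.C (a i j)) Polynomial.X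
    (fun i j hi hij hj => by
      rw [if_neg (by omega), hHess i j hi (by omega) (by omega) hj hij]; simp)
    (fun i hi hin => by rw [if_neg (by omega), hSuper i hi hin]; simp) k hk
  have hterm : ∀ j, evalNegX (cdet j
        (fun i j => (if i = j then 1 else 0) + Polynomial.X * Polynomial.C (a i j)) *
        ((if k + 1 = j + 1 then 1 else 0) + Polynomial.X * Polynomial.C (a (k + 1) (j + 1))) *
        (-Polynomial.X) ^ (k - j)) =
      (if k = j then minorSeries a k else 0) -
        minorSeries a j *
          (PowerSeries.C (a (k + 1) (j + 1)) * PowerSeries.X ^ (k - j + 1)) := by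
    intro j
    rw [map_mul, map_mul, map_pow, map_neg, map_add, map_mul, hX, hC, neg_neg, mul_add, add_mul,
      sub_eq_add_neg]
    congr 1
    · by_cases h : k = j
      · subst h; simp [minorSeries]
      · simp [h]
    · rw [neg_mul, mul_neg, neg_mul, ← PowerSeries.commute_X, mul_assoc, mul_assoc, ← pow_succ']
      rfl
  unfold minorSeries at hterm ⊢
  rw [hmain, map_sum, Finset.sum_congr rfl fun j _ => hterm j, Finset.sum_sub_distrib]
  congr 1
  rw [Finset.sum_ite_eq, if_pos (Finset.self_mem_range_succ k)]

/-- The invariant `h(t) * D_p = G_p`. Both sides satisfy the same recursion in `p`, by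
`minorSeries_succ` and `tailSeries_step`. -/
theorem tailSeries_mul_minorSeries {R : Type*} [Ring R] (n : ℕ) (a : ℕ → ℕ → R)
    (hHess : ∀ i j, 1 ≤ i → 1 ≤ j → i ≤ n → j ≤ n → i + 1 < j → a i j = 0)
    (hSuper : ∀ i, 1 ≤ i → i + 1 ≤ n → a i (i + 1) = 1) (p : ℕ) (hp : p ≤ n) :
    tailSeries n a 0 * minorSeries a p = tailSeries n a p := by
  induction p using Nat.strong_induction_on with
  | _ p ih =>
    rcases p with _ | p
    · rw [minorSeries, cdet_zero, map_one, mul_one]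
    · rw [minorSeries_succ n a hHess hSuper p hp, mul_sub, ih p (by omega) (by omega),
        tailSeries_step n a p hp, Finset.mul_sum, sub_eq_iff_eq_add]
      refine congrArg₂ (· + ·) rfl ?_
      refine Finset.sum_congr rfl fun j hj => ?_
      have := Finset.mem_range.1 hj
      rw [← ih j this (by omega), mul_assoc]

/-- The noncommutative MacMahon Master Theorem for Hessenberg matrices with unit superdiagonal:
`h(t) · e(−t) = 1` in `R⟦t⟧`; equivalently `∑_{k=0}^{m} (−1)^k · h_{m−k} · e_k = 0` for all
`m ≥ 1`. -/
theorem macmahon_hessenberg {R : Type*} [Ring R] (n : ℕ) (hn : 1 ≤ n)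
    (a : ℕ → ℕ → R)
    (hHess : ∀ i j, 1 ≤ i → 1 ≤ j → i ≤ n → j ≤ n → i + 1 < j → a i j = 0)
    (hSuper : ∀ i, 1 ≤ i → i + 1 ≤ n → a i (i + 1) = 1) :
    (PowerSeries.mk (fun m => hElem n a m)) *
        (PowerSeries.mk (fun m => (-1 : R) ^ m * eCoeff n a m)) = 1 ∧
      ∀ m, 1 ≤ m →
        ∑ k ∈ Finset.range (m + 1), (-1 : R) ^ k * (hElem n a (m - k) * eCoeff n a k) = 0 := by
  have hmul : PowerSeries.mk (fun m => hElem n a m) *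
      PowerSeries.mk (fun m => (-1 : R) ^ m * eCoeff n a m) = 1 := by
    have hh : PowerSeries.mk (fun m => hElem n a m) = tailSeries n a 0 := by
      ext m
      rw [tailSeries, PowerSeries.coeff_mk, PowerSeries.coeff_mk, hElem_eq_tailCoeff]
    have he : PowerSeries.mk (fun m => (-1 : R) ^ m * eCoeff n a m) = minorSeries a n := by
      ext m
      rw [PowerSeries.coeff_mk, minorSeries, coeff_evalNegX, eCoeff]
    rw [hh, he, tailSeries_mul_minorSeries n a hHess hSuper n le_rfl, tailSeries_top]
  refine ⟨hmul, fun m hm => ?_⟩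
  have hc := congrArg (PowerSeries.coeff m) hmul
  rw [PowerSeries.coeff_mul, PowerSeries.coeff_one, if_neg (by omega),
    ← Finset.Nat.sum_antidiagonal_swap, Finset.Nat.sum_antidiagonal_eq_sum_range_succ_mk] at hc
  rw [← hc]
  refine Finset.sum_congr rfl fun k _ => ?_
  simp only [Prod.swap, PowerSeries.coeff_mk]
  rw [← mul_assoc, ← mul_assoc, ((Commute.neg_one_left (hElem n a (m - k))).pow_left k).eq]
end
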